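/- arXiv:2503.04045 — 2 statements merged into one kernel-verified Lean document; each statement's English description precedes it below -/
import Mathlib

section
/- For every N ≥ 3, the number of divisors d(N) satisfies d(N) ≤ N^(1.07 / log log N). -/
/-!
Fix `ε > 0`. Raising the exponent of a prime `p` from `k` to `k + 1` multiplies `d(N) / N ^ ε` by
`((k + 2) / (k + 1)) / p ^ ε`, which exceeds `1` exactly when `p` is below the threshold
`yₖ = ((k + 2) / (k + 1)) ^ (1 / ε)`. Hence `log d(N) ≤ ε (log N + ∑ₖ S(yₖ))`, where
`S(y) = ∑_{p ≤ y} log (y / p)`, with equality at Ramanujan's superior highly composite numbers.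

Write `u = log log N`. For `u ≥ 9` take `ε = log 2 / u`, so that `y₀ = log N`; the crude bound
`π(n) ≤ n / 3 + 3` coming from residues modulo `6` gives `∑ₖ S(yₖ) ≤ 0.54 log N`, and
`1.54 log 2 < 1.07`. For smaller `u` take a rational `ε = a / b`; then `S(yₖ)` is explicit and
`b log d(N) ≤ a log N + c log 2` reduces to integer arithmetic. Since `u ↦ u exp (-u)` is convex for
`u ≥ 2`, the resulting bound on `u log d(N) / log N` only has to be compared with `1.07` at the
endpoints of an interval of values of `u`, and a few choices of `a / b` suffice.
-/

namespace DivisorBound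

open Finset MeasureTheory Real intervalIntegral
open scoped Chebyshev Nat.Prime

/-! ### Comparing `d(N)` with `N ^ ε` -/

/-- The sum `∑ log (y / p)` over the primes `p ≤ y`, which equals `π(y) log y - θ(y)` and
`∫ t in 2..y, π(t) / t`. -/
noncomputable def primeLogSum (y : ℝ) : ℝ :=
  ∑ p ∈ Nat.primesLE ⌊y⌋₊, log (y / p)

/-- The threshold `yₖ` such that raising the exponent of a prime `p` from `k` to `k + 1` increases
`d(N) / N ^ ε` exactly when `p < yₖ`. -/
noncomputable def exponentThreshold (ε : ℝ) (k : ℕ) : ℝ :=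
  ((k + 2) / (k + 1) : ℝ) ^ ε⁻¹

variable {ε : ℝ}

lemma exponentThreshold_pos (ε : ℝ) (k : ℕ) : 0 < exponentThreshold ε k := by
  unfold exponentThreshold; positivity

lemma one_le_exponentThreshold (hε : 0 ≤ ε) (k : ℕ) : 1 ≤ exponentThreshold ε k := by
  refine one_le_rpow ?_ (inv_nonneg.2 hε)
  rw [one_le_div (by positivity)]
  linarith

lemma log_exponentThreshold (ε : ℝ) (k : ℕ) :
    log (exponentThreshold ε k) = ε⁻¹ * log ((k + 2) / (k + 1)) :=
  log_rpow (by positivity) _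

lemma exponentThreshold_antitone (hε : 0 < ε) : Antitone (exponentThreshold ε) := by
  intro j k hjk
  have : (j : ℝ) ≤ k := by exact_mod_cast hjk
  refine rpow_le_rpow (by positivity) ?_ (by positivity)
  rw [div_le_div_iff₀ (by positivity) (by positivity)]
  linarith

lemma log_add_one_eq_sum_log_div (n : ℕ) :
    log (n + 1) = ∑ k ∈ range n, log ((k + 2 : ℝ) / (k + 1)) := by
  have h (k : ℕ) : log ((k + 2 : ℝ) / (k + 1)) = log ((k + 1 : ℕ) + 1) - log (k + 1) := by
    rw [log_div (by positivity) (by positivity)]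
    push_cast
    ring_nf
  simp only [h, sum_range_sub fun k : ℕ ↦ log ((k : ℝ) + 1), Nat.cast_zero, zero_add, log_one,
    sub_zero]

lemma posLog_exponentThreshold_div_eq_zero (hε : 0 < ε) {K k p : ℕ}
    (hK : exponentThreshold ε K ≤ 2) (hk : K ≤ k) (hp : 2 ≤ p) :
    log⁺ (exponentThreshold ε k / p) = 0 := by
  have hp' : (2 : ℝ) ≤ p := by exact_mod_cast hp
  have hy := exponentThreshold_pos ε k
  rw [posLog_eq_zero_iff, abs_of_pos (by positivity), div_le_one (by positivity)]
  exact (exponentThreshold_antitone hε hk).trans (hK.trans hp')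

lemma log_add_one_le (hε : 0 < ε) {K p : ℕ} (hK : exponentThreshold ε K ≤ 2) (hp : 2 ≤ p)
    (n : ℕ) :
    log (n + 1) ≤ ε * (n * log p + ∑ k ∈ range K, log⁺ (exponentThreshold ε k / p)) := by
  have hp0 : (p : ℝ) ≠ 0 := by positivity
  have hterm (k : ℕ) : log ((k + 2 : ℝ) / (k + 1)) =
      ε * (log p + log (exponentThreshold ε k / p)) := by
    rw [log_div (exponentThreshold_pos ε k).ne' hp0, log_exponentThreshold]
    field_simp
    ring
  have hsum : ∑ k ∈ range n, log (exponentThreshold ε k / p) ≤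
      ∑ k ∈ range K, log⁺ (exponentThreshold ε k / p) := calc
    _ ≤ ∑ k ∈ range n, log⁺ (exponentThreshold ε k / p) :=
      sum_le_sum fun _ _ ↦ le_max_right _ _
    _ ≤ ∑ k ∈ range (max K n), log⁺ (exponentThreshold ε k / p) :=
      sum_le_sum_of_subset_of_nonneg (range_mono (le_max_right _ _)) fun _ _ _ ↦ posLog_nonneg
    _ = ∑ k ∈ range K, log⁺ (exponentThreshold ε k / p) := by
      refine (sum_subset (range_mono (le_max_left _ _)) fun k _ hk ↦ ?_).symm
      exact posLog_exponentThreshold_div_eq_zero hε hK (not_lt.1 (mt mem_range.2 hk)) hp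
  calc log (n + 1) = ε * (n * log p + ∑ k ∈ range n, log (exponentThreshold ε k / p)) := by
        rw [log_add_one_eq_sum_log_div, sum_congr rfl fun k _ ↦ hterm k, ← mul_sum,
          sum_add_distrib, sum_const, card_range, nsmul_eq_mul]
    _ ≤ _ := by gcongr

lemma sum_posLog_div_le_primeLogSum {y : ℝ} (hy : 0 ≤ y) {s : Finset ℕ}
    (hs : ∀ p ∈ s, p.Prime) : ∑ p ∈ s, log⁺ (y / p) ≤ primeLogSum y := by
  have hzero (p : ℕ) (hp : p.Prime) (hpy : p ∉ Nat.primesLE ⌊y⌋₊) : log⁺ (y / p) = 0 := by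
    have hp0 : (0 : ℝ) < p := by exact_mod_cast hp.pos
    have : y < p := by simpa [Nat.mem_primesLE, hp, Nat.le_floor_iff hy] using hpy
    rw [posLog_eq_zero_iff, abs_of_nonneg (by positivity), div_le_one hp0]
    exact this.le
  calc ∑ p ∈ s, log⁺ (y / p) ≤ ∑ p ∈ s ∪ Nat.primesLE ⌊y⌋₊, log⁺ (y / p) :=
        sum_le_sum_of_subset_of_nonneg subset_union_left fun _ _ _ ↦ posLog_nonneg
    _ = ∑ p ∈ Nat.primesLE ⌊y⌋₊, log⁺ (y / p) := by
        refine (sum_subset subset_union_right fun p hp hpy ↦ hzero p ?_ hpy).symm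
        exact hs p ((mem_union.1 hp).resolve_right hpy)
    _ = primeLogSum y := by
        refine sum_congr rfl fun p hp ↦ posLog_eq_log ?_
        have hp0 : (0 : ℝ) < p := by exact_mod_cast (Nat.prime_of_mem_primesLE hp).pos
        rw [abs_of_nonneg (by positivity), one_le_div hp0]
        exact (Nat.le_floor_iff hy).1 (Nat.le_of_mem_primesLE hp)

lemma log_card_divisors_eq_sum {N : ℕ} (hN : N ≠ 0) :
    log N.divisors.card = ∑ p ∈ N.primeFactors, log (N.factorization p + 1) := by
  rw [Nat.card_divisors hN, Nat.cast_prod, log_prod fun p _ ↦ by positivity]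
  simp only [Nat.cast_add_one]

theorem log_card_divisors_le (hε : 0 < ε) {K : ℕ} (hK : exponentThreshold ε K ≤ 2) {N : ℕ}
    (hN : N ≠ 0) :
    log N.divisors.card ≤
      ε * (log N + ∑ k ∈ range K, primeLogSum (exponentThreshold ε k)) := calc
  log N.divisors.card = ∑ p ∈ N.primeFactors, log (N.factorization p + 1) :=
    log_card_divisors_eq_sum hN
  _ ≤ ∑ p ∈ N.primeFactors, ε * (N.factorization p * log p +
        ∑ k ∈ range K, log⁺ (exponentThreshold ε k / p)) :=
    sum_le_sum fun _ hp ↦ log_add_one_le hε hK (Nat.prime_of_mem_primeFactors hp).two_le _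
  _ = ε * (log N + ∑ k ∈ range K, ∑ p ∈ N.primeFactors, log⁺ (exponentThreshold ε k / p)) := by
    rw [← mul_sum, sum_add_distrib, sum_comm, log_nat_eq_sum_factorization N, Finsupp.sum,
      Nat.support_factorization]
  _ ≤ ε * (log N + ∑ k ∈ range K, primeLogSum (exponentThreshold ε k)) := by
    gcongr with k
    exact sum_posLog_div_le_primeLogSum (exponentThreshold_pos ε k).le
      fun _ ↦ Nat.prime_of_mem_primeFactors

/-! ### Numerical certificates -/

lemma primeLogSum_eq_primeCounting_mul_log_sub_theta {y : ℝ} (hy : 0 < y) :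
    primeLogSum y = π ⌊y⌋₊ * log y - θ y := by
  have hterm : ∀ p ∈ Nat.primesLE ⌊y⌋₊, log (y / p) = log y - log p := fun p hp ↦
    log_div hy.ne' (Nat.cast_ne_zero.2 (Nat.prime_of_mem_primesLE hp).ne_zero)
  rw [primeLogSum, sum_congr rfl hterm, sum_sub_distrib, sum_const,
    Nat.primesLE_card_eq_primeCounting, nsmul_eq_mul, Chebyshev.theta_eq_sum_primesLE]

lemma pow_exponentThreshold_div {a b : ℕ} (ha : a ≠ 0) (k : ℕ) :
    exponentThreshold (a / b) k ^ a = ((k + 2) / (k + 1) : ℝ) ^ b := by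
  rw [exponentThreshold, inv_div, ← rpow_natCast, ← rpow_mul (by positivity),
    div_mul_cancel₀ _ (by positivity), rpow_natCast]

lemma exponentThreshold_div_lt_iff {a b : ℕ} (ha : a ≠ 0) (k n : ℕ) :
    exponentThreshold (a / b) k < n ↔ (k + 2) ^ b < n ^ a * (k + 1) ^ b := by
  rw [← pow_lt_pow_iff_left₀ (exponentThreshold_pos _ _).le n.cast_nonneg ha,
    pow_exponentThreshold_div ha, div_pow, div_lt_iff₀ (by positivity)]
  norm_cast

lemma floor_exponentThreshold_div_eq {a b k t : ℕ} (ha : a ≠ 0)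
    (hlower : t ^ a * (k + 1) ^ b ≤ (k + 2) ^ b)
    (hupper : (k + 2) ^ b < (t + 1) ^ a * (k + 1) ^ b) :
    ⌊exponentThreshold (a / b) k⌋₊ = t := by
  rw [Nat.floor_eq_iff (exponentThreshold_pos _ _).le, ← not_lt,
    exponentThreshold_div_lt_iff ha, not_lt]
  exact ⟨hlower, mod_cast (exponentThreshold_div_lt_iff ha k (t + 1)).2 hupper⟩

/-- Integer inequalities certifying `d(N) ^ b ≤ 2 ^ c * N ^ a` for every `N ≠ 0`: here `t k` is the
integer part of the `k`-th exponent threshold of `a / b`, the `K`-th threshold is at most `2`, and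
the last inequality is `d(M) ^ b ≤ 2 ^ c * M ^ a` for the superior highly composite number
`M = ∏ k, primorial (t k)`. -/
def IsThresholdCertificate (a b c : ℕ) {K : ℕ} (t : Fin K → ℕ) : Prop :=
  0 < a ∧ 0 < b ∧
  (∀ k : Fin K, t k ^ a * (k + 1) ^ b ≤ (k + 2) ^ b ∧
    (k + 2) ^ b < (t k + 1) ^ a * (k + 1) ^ b) ∧
  (K + 2) ^ b ≤ 2 ^ a * (K + 1) ^ b ∧
  (∏ k : Fin K, (k + 2 : ℕ) ^ π (t k)) ^ b ≤
    2 ^ c * (∏ k : Fin K, (k + 1 : ℕ) ^ π (t k)) ^ b * (∏ k, primorial (t k)) ^ a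

instance (a b c : ℕ) {K : ℕ} (t : Fin K → ℕ) : Decidable (IsThresholdCertificate a b c t) := by
  unfold IsThresholdCertificate; infer_instance

namespace IsThresholdCertificate

variable {a b c K : ℕ} {t : Fin K → ℕ}

lemma exponentThreshold_le_two (h : IsThresholdCertificate a b c t) :
    exponentThreshold (a / b) K ≤ 2 := by
  obtain ⟨ha, -, -, hK, -⟩ := h
  rw [← pow_le_pow_iff_left₀ (exponentThreshold_pos _ _).le zero_le_two ha.ne',
    pow_exponentThreshold_div ha.ne', div_pow, div_le_iff₀ (by positivity)]
  exact_mod_cast hK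

lemma primeLogSum_exponentThreshold (h : IsThresholdCertificate a b c t) (k : Fin K) :
    primeLogSum (exponentThreshold (a / b) k) =
      b / a * (π (t k) * (log (k + 2) - log (k + 1))) - log (primorial (t k)) := by
  obtain ⟨ha, -, ht, -, -⟩ := h
  rw [primeLogSum_eq_primeCounting_mul_log_sub_theta (exponentThreshold_pos _ _),
    Chebyshev.theta_eq_log_primorial, floor_exponentThreshold_div_eq ha.ne' (ht k).1 (ht k).2,
    log_exponentThreshold, log_div (by positivity) (by positivity), inv_div]
  ring

lemma sum_primeCounting_mul_log_le (h : IsThresholdCertificate a b c t) :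
    b * ∑ k, π (t k) * (log (k + 2) - log (k + 1)) ≤
      c * log 2 + a * ∑ k, log (primorial (t k)) := by
  have hprimorial (k : Fin K) : (primorial (t k) : ℝ) ≠ 0 := by exact_mod_cast primorial_ne_zero _
  have hprod : ((∏ k : Fin K, (k + 2 : ℝ) ^ π (t k)) ^ b : ℝ) ≤
      2 ^ c * (∏ k : Fin K, (k + 1 : ℝ) ^ π (t k)) ^ b * (∏ k, (primorial (t k) : ℝ)) ^ a := by
    obtain ⟨-, -, -, -, hprod⟩ := h
    exact_mod_cast hprod
  have hlog := log_le_log (by positivity) hprod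
  rw [log_mul (by positivity) (pow_ne_zero _ (prod_ne_zero_iff.2 fun k _ ↦ hprimorial k)),
    log_mul (by positivity) (by positivity)] at hlog
  simp only [log_pow] at hlog
  rw [log_prod fun k _ ↦ by positivity, log_prod fun k _ ↦ by positivity,
    log_prod fun k _ ↦ hprimorial k] at hlog
  simp only [log_pow] at hlog
  simp only [mul_sub, sum_sub_distrib]
  linarith

theorem mul_log_card_divisors_le (h : IsThresholdCertificate a b c t) {N : ℕ} (hN : N ≠ 0) :
    b * log N.divisors.card ≤ a * log N + c * log 2 := by
  have ha : (0 : ℝ) < a := by exact_mod_cast h.1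
  have hb : (0 : ℝ) < b := by exact_mod_cast h.2.1
  have hcard := log_card_divisors_le (div_pos ha hb) h.exponentThreshold_le_two hN
  simp only [sum_range, h.primeLogSum_exponentThreshold, sum_sub_distrib, ← mul_sum] at hcard
  calc b * log N.divisors.card ≤ _ := mul_le_mul_of_nonneg_left hcard hb.le
    _ = a * log N + (b * ∑ k, π (t k) * (log (k + 2) - log (k + 1)) -
          a * ∑ k, log (primorial (t k))) := by field_simp
    _ ≤ a * log N + c * log 2 := by linarith [h.sum_primeCounting_mul_log_le]

end IsThresholdCertificate

/-! ### The range `log log N ≤ 9` -/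

lemma convexOn_mul_exp_neg : ConvexOn ℝ (Set.Ici 2) fun u : ℝ ↦ u * exp (-u) := by
  have hexp (u : ℝ) : HasDerivAt (fun u : ℝ ↦ exp (-u)) (-exp (-u)) u := by
    simpa using (hasDerivAt_neg u).exp
  have hderiv (u : ℝ) : HasDerivAt (fun u : ℝ ↦ u * exp (-u)) ((1 - u) * exp (-u)) u :=
    ((hasDerivAt_id' u).mul (hexp u)).congr_deriv (by ring)
  have hderiv2 (u : ℝ) : HasDerivAt (fun u : ℝ ↦ (1 - u) * exp (-u)) ((u - 2) * exp (-u)) u :=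
    (((hasDerivAt_id' u).const_sub 1).mul (hexp u)).congr_deriv (by ring)
  refine convexOn_of_hasDerivWithinAt2_nonneg (convex_Ici 2)
    (fun u _ ↦ (hderiv u).continuousAt.continuousWithinAt)
    (fun u _ ↦ (hderiv u).hasDerivWithinAt) (fun u _ ↦ (hderiv2 u).hasDerivWithinAt) fun u hu ↦ ?_
  rw [interior_Ici, Set.mem_Ioi] at hu
  exact mul_nonneg (sub_nonneg.2 hu.le) (exp_pos _).le

lemma ne_zero_of_log_eq_exp {N : ℕ} {u : ℝ} (h : log N = exp u) : N ≠ 0 := by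
  rintro rfl
  simp [(exp_pos u).ne] at h

lemma IsThresholdCertificate.log_card_divisors_mul_le {a b c K N : ℕ} {t : Fin K → ℕ}
    (h : IsThresholdCertificate a b c t) {C p q u E F : ℝ} (hp : 2 ≤ p)
    (hEp : exp (-p) ≤ E) (hCp : a * p + c * 0.6931471808 * (p * E) ≤ C * b)
    (hFq : exp (-q) ≤ F) (hCq : a * q + c * 0.6931471808 * (q * F) ≤ C * b)
    (hu : u ∈ Set.Icc p q) (hN : log N = exp u) :
    log N.divisors.card * u ≤ C * log N := by
  have hb : (0 : ℝ) < b := by exact_mod_cast h.2.1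
  have hu0 : 0 ≤ u := by linarith [hu.1]
  have hlog2 := log_two_lt_d9.le
  have hconv : ConvexOn ℝ (Set.Ici 2) fun v : ℝ ↦ a * v + c * log 2 * (v * exp (-v)) :=
    ((convexOn_id (convex_Ici 2)).smul a.cast_nonneg).add
      (convexOn_mul_exp_neg.smul (by positivity : 0 ≤ c * log 2))
  have hend {v G : ℝ} (hv : 2 ≤ v) (hG : exp (-v) ≤ G)
      (hCv : a * v + c * 0.6931471808 * (v * G) ≤ C * b) :
      a * v + c * log 2 * (v * exp (-v)) ≤ C * b := by
    refine le_trans ?_ hCv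
    gcongr
  have hbound : a * u + c * log 2 * (u * exp (-u)) ≤ C * b :=
    (hconv.le_max_of_mem_Icc hp (hp.trans (hu.1.trans hu.2)) hu).trans
      (max_le (hend hp hEp hCp) (hend (hp.trans (hu.1.trans hu.2)) hFq hCq))
  refine le_of_mul_le_mul_left ?_ hb
  calc b * (log N.divisors.card * u) = b * log N.divisors.card * u := by ring
    _ ≤ (a * exp u + c * log 2) * u := by
      rw [← hN]
      exact mul_le_mul_of_nonneg_right (h.mul_log_card_divisors_le (ne_zero_of_log_eq_exp hN)) hu0
    _ = exp u * (a * u + c * log 2 * (u * exp (-u))) := by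
      rw [exp_neg]; field_simp
    _ ≤ exp u * (C * b) := by gcongr
    _ = b * (C * log N) := by rw [hN]; ring

lemma exp_neg_le_of_one_le_pow_mul {r s : ℕ} [NeZero s] {p E : ℝ} (hrp : r ≤ p * s)
    (hE : 0 ≤ E) (h : 1 ≤ E ^ s * 2.7182818283 ^ r) : exp (-p) ≤ E := by
  have hpow : exp (-p) ^ s * exp 1 ^ r ≤ 1 := by
    rw [← exp_nat_mul, ← exp_nat_mul, ← exp_add, exp_le_one_iff]
    linarith
  rw [← pow_le_pow_iff_left₀ (exp_pos _).le hE (NeZero.ne s)]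
  refine le_of_mul_le_mul_right ?_ (pow_pos (exp_pos 1) r)
  calc _ ≤ 1 := hpow
    _ ≤ E ^ s * 2.7182818283 ^ r := h
    _ ≤ E ^ s * exp 1 ^ r := by gcongr; exact exp_one_gt_d9.le

lemma log_le_div_add_log_sub_one {x a : ℝ} (hx : 0 < x) (ha : 0 < a) :
    log x ≤ x / a + (log a - 1) := by
  have h := log_le_sub_one_of_pos (div_pos hx ha)
  rw [log_div hx.ne' ha.ne'] at h
  linarith

lemma log_card_divisors_mul_log_log_le_of_log_le {N : ℕ} (hN : 1.09 ≤ log N)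
    (hN' : log N ≤ 7.6) : log N.divisors.card * log (log N) ≤ 1.07 * log N := by
  have hcert : IsThresholdCertificate 10 27 39 ![6, 2, 2] := by decide +kernel
  have hN0 : N ≠ 0 := by
    rintro rfl
    norm_num at hN
  have hcard := hcert.mul_log_card_divisors_le hN0
  have hloglog : log (log N) ≤ log N / 5 + 0.6095 := by
    have := log_le_div_add_log_sub_one (x := log N) (a := 5) (by linarith) (by norm_num)
    linarith [log_five_lt_d9]
  have := log_two_lt_d9
  have hnonneg : 0 ≤ log (log N) := log_nonneg (by linarith)
  push_cast at hcard
  suffices 27 * log N.divisors.card * log (log N) ≤ 27 * (1.07 * log N) by linarith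
  calc 27 * log N.divisors.card * log (log N)
      ≤ (10 * log N + 39 * log 2) * log (log N) := by gcongr
    _ ≤ (10 * log N + 39 * 0.6931471808) * (log N / 5 + 0.6095) := by gcongr
    _ ≤ 27 * (1.07 * log N) := by nlinarith [mul_nonneg (sub_nonneg.2 hN) (sub_nonneg.2 hN')]

lemma log_card_divisors_mul_le_of_le_two {N : ℕ} {u : ℝ} (hN : 3 ≤ N) (hu : u ≤ 2)
    (hNu : log N = exp u) : log N.divisors.card * u ≤ 1.07 * log N := by
  have hlog_three : log 3 ≤ log N := log_le_log (by norm_num) (by exact_mod_cast hN)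
  have hexp_two : exp 2 ≤ 7.6 := calc
    exp 2 = exp 1 ^ 2 := by rw [← exp_nat_mul]; norm_num
    _ ≤ 2.7182818286 ^ 2 := by gcongr; exact exp_one_lt_d9.le
    _ ≤ 7.6 := by norm_num
  have hlog := log_card_divisors_mul_log_log_le_of_log_le (by linarith [log_three_gt_d9])
    (hNu.trans_le ((exp_le_exp.2 hu).trans hexp_two))
  rwa [hNu, log_exp, ← hNu] at hlog

set_option maxRecDepth 100000 in
theorem log_card_divisors_mul_le_of_le_nine {N : ℕ} {u : ℝ} (hN : 3 ≤ N) (hu : u ≤ 9)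
    (hNu : log N = exp u) : log N.divisors.card * u ≤ 1.07 * log N := by
  have hexp₀ : exp (-2) ≤ 0.136 := exp_neg_le_of_one_le_pow_mul (r := 2) (s := 1)
    (by norm_num) (by norm_num) (by norm_num)
  have hexp₁ : exp (-2.75) ≤ 0.064 := exp_neg_le_of_one_le_pow_mul (r := 11) (s := 4)
    (by norm_num) (by norm_num) (by norm_num)
  have hexp₂ : exp (-3.1) ≤ 0.0451 := exp_neg_le_of_one_le_pow_mul (r := 31) (s := 10)
    (by norm_num) (by norm_num) (by norm_num)
  have hexp₃ : exp (-3.5) ≤ 0.0302 := exp_neg_le_of_one_le_pow_mul (r := 7) (s := 2)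
    (by norm_num) (by norm_num) (by norm_num)
  have hexp₄ : exp (-5) ≤ 0.0068 := exp_neg_le_of_one_le_pow_mul (r := 5) (s := 1)
    (by norm_num) (by norm_num) (by norm_num)
  have hexp₅ : exp (-9) ≤ 0.00013 := exp_neg_le_of_one_le_pow_mul (r := 9) (s := 1)
    (by norm_num) (by norm_num) (by norm_num)
  -- Each ratio `a / b` was found by search; it determines `t`, and `c` is the least that works.
  have hcert₁ : IsThresholdCertificate 4 15 41 ![13, 4, 2, 2] := by decide +kernel
  have hcert₂ : IsThresholdCertificate 6 25 84 ![17, 5, 3, 2, 2] := by decide +kernel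
  have hcert₃ : IsThresholdCertificate 5 23 94 ![24, 6, 3, 2, 2, 2] := by decide +kernel
  have hcert₄ : IsThresholdCertificate 2 11 65 ![45, 9, 4, 3, 2, 2, 2] := by decide +kernel
  have hcert₅ : IsThresholdCertificate 3 26 525 ![406, 33, 12, 6, 4, 3, 3, 2, 2, 2, 2, 2] := by
    decide +kernel
  rcases le_total u 2 with hu₀ | hu₀
  · exact log_card_divisors_mul_le_of_le_two hN hu₀ hNu
  rcases le_total u 2.75 with hu₁ | hu₁
  · exact hcert₁.log_card_divisors_mul_le le_rfl hexp₀ (by norm_num) hexp₁ (by norm_num)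
      ⟨hu₀, hu₁⟩ hNu
  rcases le_total u 3.1 with hu₂ | hu₂
  · exact hcert₂.log_card_divisors_mul_le (by norm_num) hexp₁ (by norm_num) hexp₂ (by norm_num)
      ⟨hu₁, hu₂⟩ hNu
  rcases le_total u 3.5 with hu₃ | hu₃
  · exact hcert₃.log_card_divisors_mul_le (by norm_num) hexp₂ (by norm_num) hexp₃ (by norm_num)
      ⟨hu₂, hu₃⟩ hNu
  rcases le_total u 5 with hu₄ | hu₄
  · exact hcert₄.log_card_divisors_mul_le (by norm_num) hexp₃ (by norm_num) hexp₄ (by norm_num)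
      ⟨hu₃, hu₄⟩ hNu
  · exact hcert₅.log_card_divisors_mul_le (by norm_num) hexp₄ (by norm_num) hexp₅ (by norm_num)
      ⟨hu₄, hu⟩ hNu

/-! ### The range `9 ≤ log log N` -/

lemma primeCounting_le (n : ℕ) : (π n : ℝ) ≤ n / 3 + 3 := by
  suffices 3 * π n ≤ n + 9 by
    have : (3 * π n : ℝ) ≤ n + 9 := by exact_mod_cast this
    linarith
  rcases le_total n 6 with hn | hn
  · have : π n ≤ π 6 := Nat.monotone_primeCounting hn
    have h6 : π 6 = 3 := by decide
    omega
  · obtain ⟨m, rfl⟩ := Nat.exists_eq_add_of_le hn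
    have := Nat.primeCounting_add_le (a := 6) (by norm_num) le_rfl m
    have h6 : π 6 = 3 := by decide
    have hφ : Nat.totient 6 = 2 := by decide
    rw [h6, hφ] at this
    omega

lemma primeLogSum_eq_integral {y : ℝ} (hy : 2 ≤ y) :
    primeLogSum y = ∫ t in (2 : ℝ)..y, π ⌊t⌋₊ / t := by
  rw [primeLogSum_eq_primeCounting_mul_log_sub_theta (by linarith),
    Chebyshev.theta_eq_primeCounting_mul_log_sub_integral hy, sub_sub_cancel]

lemma primeLogSum_of_lt_two {y : ℝ} (hy : y < 2) : primeLogSum y = 0 := by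
  have hfloor : ⌊y⌋₊ < 2 := (Nat.floor_lt' two_ne_zero).2 hy
  refine sum_eq_zero fun p hp ↦ ?_
  have := Nat.two_le_of_mem_primesLE hp
  have := Nat.le_of_mem_primesLE hp
  omega

lemma primeCounting_floor_div_le {t : ℝ} (ht : 0 < t) : π ⌊t⌋₊ / t ≤ 1 / 3 + 3 * t⁻¹ := calc
  π ⌊t⌋₊ / t ≤ (t / 3 + 3) / t := by
    gcongr
    linarith [primeCounting_le ⌊t⌋₊, Nat.floor_le ht.le]
  _ = 1 / 3 + 3 * t⁻¹ := by field_simp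

lemma primeLogSum_le {y : ℝ} (hy : 1 ≤ y) : primeLogSum y ≤ y / 3 + 3 * log y := by
  rcases lt_or_ge y 2 with hy2 | hy2
  · rw [primeLogSum_of_lt_two hy2]
    have := log_nonneg hy
    positivity
  have hinv : IntervalIntegrable (fun t : ℝ ↦ 3 * t⁻¹) volume 2 y := by
    refine (intervalIntegrable_inv_iff.2 (.inr fun h ↦ ?_)).const_mul 3
    linarith [(Set.uIcc_of_le hy2 ▸ h).1]
  have hpos {t : ℝ} (ht : t ∈ Set.Ioc 2 y) : 0 < t := two_pos.trans ht.1
  calc primeLogSum y = ∫ t in (2 : ℝ)..y, π ⌊t⌋₊ / t := primeLogSum_eq_integral hy2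
    _ ≤ ∫ t in (2 : ℝ)..y, (1 / 3 + 3 * t⁻¹) := by
      rw [integral_of_le hy2, integral_of_le hy2]
      refine integral_mono_of_nonneg (ae_restrict_of_forall_mem measurableSet_Ioc fun t ht ↦ ?_)
        (intervalIntegrable_const.add hinv).1
        (ae_restrict_of_forall_mem measurableSet_Ioc fun t ht ↦
          primeCounting_floor_div_le (hpos ht))
      exact div_nonneg (Nat.cast_nonneg _) (hpos ht).le
    _ = (y - 2) / 3 + 3 * (log y - log 2) := by
      rw [intervalIntegral.integral_add intervalIntegrable_const hinv,
        intervalIntegral.integral_const, intervalIntegral.integral_const_mul,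
        integral_inv_of_pos two_pos (two_pos.trans_le hy2), log_div (by positivity) two_ne_zero,
        smul_eq_mul]
      ring
    _ ≤ y / 3 + 3 * log y := by linarith [log_two_gt_d9]

lemma le_mul_exp {u₀ c u : ℝ} (hu₀ : 0 < u₀) (hc : 1 ≤ c * u₀) (hu : u₀ ≤ u) :
    u ≤ u₀ * exp (c * (u - u₀)) := calc
  u = u₀ + (u - u₀) := by ring
  _ ≤ u₀ + (c * u₀) * (u - u₀) := by nlinarith
  _ = u₀ * (c * (u - u₀) + 1) := by ring
  _ ≤ u₀ * exp (c * (u - u₀)) := by gcongr; exact add_one_le_exp _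

variable {u : ℝ}

lemma exponentThreshold_log_two_div_zero (u : ℝ) : exponentThreshold (log 2 / u) 0 = exp u := by
  have hlog_two : log 2 ≠ 0 := (log_pos one_lt_two).ne'
  rw [← exp_log (exponentThreshold_pos _ _), log_exponentThreshold]
  norm_num [hlog_two]

lemma log_three_halves_le : log (3 / 2) ≤ 0.59 * log 2 := by
  rw [log_div (by norm_num) (by norm_num)]
  linarith [log_three_lt_d9, log_two_gt_d9]

lemma exponentThreshold_log_two_div_succ_le (hu : 0 < u) (k : ℕ) :
    exponentThreshold (log 2 / u) (k + 1) ≤ exp (0.59 * u) := by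
  have hlog_two := log_pos one_lt_two
  refine (exponentThreshold_antitone (div_pos hlog_two hu) (Nat.le_add_left 1 k)).trans ?_
  rw [← log_le_iff_le_exp (exponentThreshold_pos _ _), log_exponentThreshold, inv_div,
    div_mul_eq_mul_div, div_le_iff₀ hlog_two]
  have := log_three_halves_le
  norm_num at this ⊢
  nlinarith

lemma exponentThreshold_log_two_div_le_two (hu : 0 < u) {k : ℕ} (hk : u ≤ log 2 ^ 2 * (k + 1)) :
    exponentThreshold (log 2 / u) k ≤ 2 := by
  have : 0 < log 2 := log_pos one_lt_two
  have hlog : log ((k + 2 : ℝ) / (k + 1)) ≤ 1 / (k + 1) := by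
    refine (log_le_sub_one_of_pos (by positivity)).trans_eq ?_
    field_simp
    ring
  rw [← log_le_log_iff (exponentThreshold_pos _ _) two_pos, log_exponentThreshold, inv_div]
  calc u / log 2 * log ((k + 2) / (k + 1)) ≤ u / log 2 * (1 / (k + 1)) := by gcongr
    _ ≤ log 2 := by
      rw [div_mul_div_comm, mul_one, div_le_iff₀ (by positivity)]
      linarith

lemma sum_primeLogSum_exponentThreshold_log_two_div_le (hu : 0 < u) (K : ℕ) :
    ∑ k ∈ range (K + 1), primeLogSum (exponentThreshold (log 2 / u) k) ≤
      exp u / 3 + 3 * u + K * (exp (0.59 * u) / 3 + 3 * (0.59 * u)) := by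
  have hε : 0 ≤ log 2 / u := div_nonneg (log_nonneg one_le_two) hu.le
  have hle {k : ℕ} {v : ℝ} (h : exponentThreshold (log 2 / u) k ≤ exp v) :
      primeLogSum (exponentThreshold (log 2 / u) k) ≤ exp v / 3 + 3 * v := by
    refine (primeLogSum_le (one_le_exponentThreshold hε k)).trans ?_
    have := (log_le_iff_le_exp (exponentThreshold_pos _ _)).2 h
    gcongr
  rw [sum_range_succ', add_comm]
  refine add_le_add (hle (exponentThreshold_log_two_div_zero u).le) ?_
  refine (sum_le_card_nsmul _ _ _
    fun k _ ↦ hle (exponentThreshold_log_two_div_succ_le hu k)).trans_eq ?_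
  rw [card_range, nsmul_eq_mul]

lemma exp_div_three_add_le (hu : 9 ≤ u) :
    exp u / 3 + 3 * u + 2.09 * u * (exp (0.59 * u) / 3 + 3 * (0.59 * u)) ≤ 0.54 * exp u := by
  have hexp₁ : exp (-3.69) ≤ 0.0256 := exp_neg_le_of_one_le_pow_mul (r := 11) (s := 3)
    (by norm_num) (by norm_num) (by norm_num)
  have hexp₂ : exp (-9) ≤ 0.00013 := exp_neg_le_of_one_le_pow_mul (r := 9) (s := 1)
    (by norm_num) (by norm_num) (by norm_num)
  have hlinear : u ≤ 9 * 0.00013 * exp u := calc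
    u ≤ 9 * exp (1 * (u - 9)) := le_mul_exp (by norm_num) (by norm_num) hu
    _ = 9 * exp (-9) * exp u := by rw [mul_assoc, ← exp_add]; ring_nf
    _ ≤ 9 * 0.00013 * exp u := by gcongr
  have hsq : u ^ 2 ≤ 81 * 0.00013 * exp u := calc
    u ^ 2 ≤ (9 * exp (0.5 * (u - 9))) ^ 2 := by
      gcongr
      exact le_mul_exp (by norm_num) (by norm_num) hu
    _ = 81 * exp (-9) * exp u := by
      rw [mul_pow, ← exp_nat_mul, mul_assoc, ← exp_add]
      ring_nf
    _ ≤ 81 * 0.00013 * exp u := by gcongr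
  have hmixed : u * exp (0.59 * u) ≤ 9 * 0.0256 * exp u := calc
    u * exp (0.59 * u) ≤ 9 * exp (0.41 * (u - 9)) * exp (0.59 * u) := by
      gcongr
      exact le_mul_exp (by norm_num) (by norm_num) hu
    _ = 9 * exp (-3.69) * exp u := by
      rw [mul_assoc, ← exp_add, mul_assoc, ← exp_add]
      ring_nf
    _ ≤ 9 * 0.0256 * exp u := by gcongr
  nlinarith [exp_pos u]

theorem log_card_divisors_mul_le_of_nine_le {N : ℕ} (hu : 9 ≤ u) (hNu : log N = exp u) :
    log N.divisors.card * u ≤ 1.07 * log N := by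
  have hu0 : 0 < u := by linarith
  have : 0 < log 2 := log_pos one_lt_two
  set K := ⌊u / log 2 ^ 2⌋₊
  have hK : (K : ℝ) ≤ 2.09 * u := by
    refine (Nat.floor_le (by positivity)).trans ((div_le_iff₀ (by positivity)).2 ?_)
    have : 1 ≤ 2.09 * log 2 ^ 2 := by nlinarith [log_two_gt_d9]
    nlinarith
  have hKu : u ≤ log 2 ^ 2 * ((K + 1 : ℕ) + 1) := by
    have := (div_lt_iff₀' (by positivity)).1 (Nat.lt_floor_add_one (u / log 2 ^ 2))
    push_cast
    nlinarith [sq_nonneg (log 2)]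
  calc log N.divisors.card * u
      ≤ log 2 / u *
          (log N + ∑ k ∈ range (K + 1), primeLogSum (exponentThreshold (log 2 / u) k)) * u := by
        gcongr
        exact log_card_divisors_le (by positivity) (exponentThreshold_log_two_div_le_two hu0 hKu)
          (ne_zero_of_log_eq_exp hNu)
    _ = log 2 *
          (exp u + ∑ k ∈ range (K + 1), primeLogSum (exponentThreshold (log 2 / u) k)) := by
        rw [hNu]
        field_simp
    _ ≤ log 2 * (exp u + 0.54 * exp u) := by
        gcongr
        refine (sum_primeLogSum_exponentThreshold_log_two_div_le hu0 K).trans ?_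
        refine le_trans ?_ (exp_div_three_add_le hu)
        gcongr
    _ ≤ 1.07 * log N := by
        rw [hNu]
        nlinarith [exp_pos u, log_two_lt_d9]

theorem log_card_divisors_mul_log_log_le {N : ℕ} (hN : 3 ≤ N) :
    log N.divisors.card * log (log N) ≤ 1.07 * log N := by
  have hN1 : (1 : ℝ) < N := by exact_mod_cast (by lia : 1 < N)
  have hNu : log N = exp (log (log N)) := (exp_log (log_pos hN1)).symm
  rcases le_total (log (log N)) 9 with hu | hu
  · exact log_card_divisors_mul_le_of_le_nine hN hu hNu
  · exact log_card_divisors_mul_le_of_nine_le hu hNu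

end DivisorBound

theorem stmt_4 (N : ℕ) (hN : 3 ≤ N) :
    (N.divisors.card : ℝ) ≤ (N : ℝ) ^ (1.07 / Real.log (Real.log N)) := by
  have hN0 : N ≠ 0 := by lia
  have hcard : (0 : ℝ) < N.divisors.card := by
    exact_mod_cast Finset.card_pos.2 (Nat.nonempty_divisors.2 hN0)
  have hlog_three : Real.log 3 ≤ Real.log N :=
    Real.log_le_log (by norm_num) (by exact_mod_cast hN)
  have hloglog : 0 < Real.log (Real.log N) :=
    Real.log_pos (by linarith [Real.log_three_gt_d9])
  rw [Real.rpow_def_of_pos (by positivity), ← Real.log_le_iff_le_exp hcard, mul_div_assoc',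
    le_div_iff₀ hloglog, mul_comm (Real.log N)]
  exact DivisorBound.log_card_divisors_mul_log_log_le hN
end

section
/- Fix an integer k ≥ 1. Then the sum over primes p ≤ x with gcd(p, k) = 1 of gcd(p−1, k)/p equals d(k)·log log x + B_k + O_k(1/log x) for some constant B_k depending only on k, where d(k) is the number of divisors of k. -/
/-!
For a prime `p`, `gcd (p - 1) k` is the sum of `φ d` over the divisors `d` of `k` with
`p ≡ 1 mod d`, and the primes `p ≡ 1 mod d` contribute `(log log x) / φ d` to `∑ p ≤ x, 1 / p`.
Hence each divisor of `k` contributes exactly one `log log x`.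

By orthogonality of characters, the claim on arithmetic progressions amounts to estimates for
`∑ p ≤ x, χ p / p`, which follow by partial summation from `∑ n ≤ N, Λ n / n = log N + O(1)` and,
for `χ ≠ 1`, from `∑ n ≤ N, Λ n * χ n / n = O(1)`. The latter rests on `L(1, χ) ≠ 0`: summing
`log n = ∑ i ∣ n, Λ i` against `χ n / n` gives
`L(1, χ) * ∑ n ≤ N, Λ n * χ n / n = ∑ n ≤ N, χ n * log n / n + O(1)`, where the sum on the right
stays bounded by Dirichlet's test.
-/

section

open Asymptotics Filter Finset Real Topology

section SummationByParts

variable {E : Type*} [NormedAddCommGroup E]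

lemma norm_sum_Ioc_le_two_mul {c : ℕ → E} {K : ℝ} (hc : ∀ n, ‖∑ i ∈ Ioc 0 n, c i‖ ≤ K)
    {m n : ℕ} (hmn : m ≤ n) : ‖∑ i ∈ Ioc m n, c i‖ ≤ 2 * K := by
  rw [← add_sub_cancel_left (∑ i ∈ Ioc 0 m, c i) (∑ i ∈ Ioc m n, c i),
    sum_Ioc_consecutive _ m.zero_le hmn, two_mul]
  exact norm_sub_le_of_le (hc n) (hc m)

variable [NormedSpace ℝ E]

lemma norm_sum_Ioc_smul_sub_le {c : ℕ → E} {f : ℕ → ℝ} {m : ℕ} {K : ℝ}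
    (hc : ∀ n, m ≤ n → ‖∑ i ∈ Ioc m n, c i‖ ≤ K) (hf : AntitoneOn f (Set.Ioi m))
    {n : ℕ} (hn : m < n) :
    ‖∑ i ∈ Ioc m n, f i • c i - f n • ∑ i ∈ Ioc m n, c i‖ ≤ K * (f (m + 1) - f n) := by
  induction n, hn using Nat.le_induction with
  | base => simp
  | succ n hn ih =>
    have hmn : m < n := hn
    have hstep : 0 ≤ f n - f (n + 1) :=
      sub_nonneg.2 (hf (Set.mem_Ioi.2 hmn) (Set.mem_Ioi.2 (by omega)) n.le_succ)
    calc ‖∑ i ∈ Ioc m (n + 1), f i • c i - f (n + 1) • ∑ i ∈ Ioc m (n + 1), c i‖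
        = ‖(∑ i ∈ Ioc m n, f i • c i - f n • ∑ i ∈ Ioc m n, c i)
            + (f n - f (n + 1)) • ∑ i ∈ Ioc m n, c i‖ := by
          rw [sum_Ioc_succ_top hmn.le, sum_Ioc_succ_top hmn.le]
          congr 1
          module
      _ ≤ K * (f (m + 1) - f n) + (f n - f (n + 1)) * K := by
          refine norm_add_le_of_le ih ?_
          rw [norm_smul, norm_of_nonneg hstep]
          gcongr
          exact hc n hmn.le
      _ = K * (f (m + 1) - f (n + 1)) := by ring

lemma norm_sum_Ioc_smul_le {c : ℕ → E} {f : ℕ → ℝ} {m : ℕ} {K : ℝ}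
    (hc : ∀ n, m ≤ n → ‖∑ i ∈ Ioc m n, c i‖ ≤ K) (hf : AntitoneOn f (Set.Ioi m))
    (hf₀ : ∀ n, m < n → 0 ≤ f n) {n : ℕ} (hn : m ≤ n) :
    ‖∑ i ∈ Ioc m n, f i • c i‖ ≤ K * f (m + 1) := by
  have hK : 0 ≤ K := (norm_nonneg _).trans (hc m le_rfl)
  rcases hn.eq_or_lt with rfl | hn
  · simpa using mul_nonneg hK (hf₀ _ m.lt_succ_self)
  calc ‖∑ i ∈ Ioc m n, f i • c i‖
      = ‖(∑ i ∈ Ioc m n, f i • c i - f n • ∑ i ∈ Ioc m n, c i)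
          + f n • ∑ i ∈ Ioc m n, c i‖ := by rw [sub_add_cancel]
    _ ≤ K * (f (m + 1) - f n) + f n * K := by
        refine norm_add_le_of_le (norm_sum_Ioc_smul_sub_le hc hf hn) ?_
        rw [norm_smul, norm_of_nonneg (hf₀ n hn)]
        gcongr
        exacts [hf₀ n hn, hc n hn.le]
    _ = K * f (m + 1) := by ring

end SummationByParts

section Convergence

variable {E : Type*} [NormedAddCommGroup E] [CompleteSpace E]

lemma exists_sub_isBigO_of_norm_sub_le {F : ℕ → E} {b : ℕ → ℝ} {m : ℕ}
    (hF : ∀ M N, m ≤ M → M ≤ N → ‖F N - F M‖ ≤ b M) (hb : Tendsto b atTop (𝓝 0)) :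
    ∃ B, (fun N ↦ F N - B) =O[atTop] b := by
  have hcauchy : CauchySeq fun n ↦ F (n + m) :=
    cauchySeq_of_le_tendsto_0' (fun n ↦ b (n + m))
      (fun M N hMN ↦ by
        rw [dist_comm, dist_eq_norm]
        exact hF _ _ (by omega) (by omega))
      (hb.comp (tendsto_add_atTop_nat m))
  obtain ⟨B, hB⟩ := cauchySeq_tendsto_of_complete hcauchy
  rw [tendsto_add_atTop_iff_nat] at hB
  refine ⟨B, IsBigO.of_bound 1 ?_⟩
  filter_upwards [eventually_ge_atTop m] with M hM
  have hbound : ‖B - F M‖ ≤ b M :=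
    le_of_tendsto (hB.sub_const (F M)).norm
      ((eventually_ge_atTop M).mono fun N hMN ↦ hF M N hM hMN)
  rw [one_mul, norm_sub_rev]
  exact hbound.trans (le_norm_self _)

lemma exists_sub_isBigO_of_norm_sub_succ_le {F : ℕ → E} {b : ℕ → ℝ} {m : ℕ}
    (hF : ∀ n, m ≤ n → ‖F (n + 1) - F n‖ ≤ b n - b (n + 1)) (hb₀ : ∀ n, m ≤ n → 0 ≤ b n)
    (hb : Tendsto b atTop (𝓝 0)) :
    ∃ B, (fun N ↦ F N - B) =O[atTop] b := by
  refine exists_sub_isBigO_of_norm_sub_le (m := m) (fun M N hM hMN ↦ ?_) hb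
  calc ‖F N - F M‖ ≤ ∑ n ∈ Ico M N, (b n - b (n + 1)) := by
        rw [← dist_eq_norm, dist_comm]
        refine dist_le_Ico_sum_of_dist_le hMN fun {n} hn _ ↦ ?_
        rw [dist_comm, dist_eq_norm]
        exact hF n (hM.trans hn)
    _ = b M - b N := by
        rw [← neg_inj, ← sum_neg_distrib, neg_sub]
        simpa only [neg_sub] using sum_Ico_sub b hMN
    _ ≤ b M := sub_le_self _ (hb₀ N (hM.trans hMN))

variable [NormedSpace ℝ E]

lemma exists_sum_Ioc_smul_sub_isBigO {c : ℕ → E} {f : ℕ → ℝ} {m : ℕ}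
    (hc : (fun N ↦ ∑ i ∈ Ioc 0 N, c i) =O[atTop] (fun _ ↦ 1 : ℕ → ℝ))
    (hf : AntitoneOn f (Set.Ioi m)) (hf₀ : Tendsto f atTop (𝓝 0)) :
    ∃ S, (fun N ↦ ∑ i ∈ Ioc 0 N, f i • c i - S) =O[atTop] f := by
  obtain ⟨K, hK⟩ := isBigO_one_nat_atTop_iff.1 hc
  have hK₀ : 0 ≤ K := (norm_nonneg _).trans (hK 0)
  have hf_nonneg (n : ℕ) (hn : m < n) : 0 ≤ f n :=
    le_of_tendsto hf₀ <| (eventually_ge_atTop n).mono fun N hN ↦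
      hf (Set.mem_Ioi.2 hn) (Set.mem_Ioi.2 (hn.trans_le hN)) hN
  have htail (M N : ℕ) (hM : m + 1 ≤ M) (hMN : M ≤ N) :
      ‖∑ i ∈ Ioc 0 N, f i • c i - ∑ i ∈ Ioc 0 M, f i • c i‖ ≤ 2 * K * f M := by
    rw [← sum_Ioc_consecutive _ M.zero_le hMN, add_sub_cancel_left]
    refine (norm_sum_Ioc_smul_le (fun n hn ↦ norm_sum_Ioc_le_two_mul hK hn)
      (hf.mono (Set.Ioi_subset_Ioi (by omega))) (fun n hn ↦ hf_nonneg n (by omega)) hMN).trans ?_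
    gcongr
    exact hf (Set.mem_Ioi.2 hM) (Set.mem_Ioi.2 (by omega)) M.le_succ
  obtain ⟨S, hS⟩ := exists_sub_isBigO_of_norm_sub_le htail (by simpa using hf₀.const_mul (2 * K))
  exact ⟨S, hS.trans (isBigO_const_mul_self _ _ _)⟩

end Convergence

section LogSums

lemma log_sub_log_le_div {x y : ℝ} (hx : 0 < x) (hy : 0 < y) :
    log x - log y ≤ (x - y) / y := by
  rw [← log_div hx.ne' hy.ne', sub_div, div_self hy.ne']
  exact log_le_sub_one_of_pos (div_pos hx hy)

lemma abs_sub_div_sub_log_sub_log_le {u v : ℝ} (hv : 0 < v) (hvu : v ≤ u) (huv : u ≤ v + 1) :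
    |(u - v) / u - (log u - log v)| ≤ v⁻¹ - u⁻¹ := by
  have hu : 0 < u := hv.trans_le hvu
  have hupper : log u - log v ≤ (u - v) / v := log_sub_log_le_div hu hv
  have hlower : log v - log u ≤ (v - u) / u := log_sub_log_le_div hv hu
  have hneg : (v - u) / u = -((u - v) / u) := by ring
  have hgap : (u - v) / v - (u - v) / u ≤ v⁻¹ - u⁻¹ := by
    rw [div_eq_mul_inv, div_eq_mul_inv, ← mul_sub]
    exact mul_le_of_le_one_left (sub_nonneg.2 (inv_anti₀ hv hvu)) (by linarith)
  rw [abs_le]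
  constructor <;> linarith [inv_anti₀ hv hvu]

lemma log_natCast_pos {n : ℕ} (hn : 2 ≤ n) : 0 < log n :=
  log_pos (by exact_mod_cast hn)

lemma tendsto_inv_log_natCast : Tendsto (fun n : ℕ ↦ (log n)⁻¹) atTop (𝓝 0) :=
  (tendsto_log_atTop.comp tendsto_natCast_atTop_atTop).inv_tendsto_atTop

lemma antitoneOn_inv_log_natCast : AntitoneOn (fun n : ℕ ↦ (log n)⁻¹) (Set.Ioi 1) := by
  intro m hm n _ hmn
  exact inv_anti₀ (log_natCast_pos hm)
    (log_le_log (by exact_mod_cast hm.pos) (by exact_mod_cast hmn))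

lemma sum_Ioc_log_sub_log_pred (N : ℕ) :
    ∑ n ∈ Ioc 0 N, (log n - log (n - 1 : ℕ)) = log N := by
  induction N with
  | zero => simp
  | succ N ih => rw [sum_Ioc_succ_top N.zero_le, ih]; simp

lemma exists_sum_Ioc_log_sub_log_div_log_isBigO :
    ∃ B, (fun N : ℕ ↦ ∑ n ∈ Ioc 0 N, (log n - log (n - 1 : ℕ)) / log n - log (log N) - B)
      =O[atTop] fun N : ℕ ↦ (log N)⁻¹ := by
  refine exists_sub_isBigO_of_norm_sub_succ_le (m := 2) (fun n hn ↦ ?_)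
    (fun n hn ↦ (inv_pos.2 (log_natCast_pos hn)).le) tendsto_inv_log_natCast
  have hn₀ : (1 : ℝ) ≤ n := by exact_mod_cast (by omega : 1 ≤ n)
  have hlog_succ : log (n + 1 : ℕ) ≤ log n + 1 := by
    have := log_sub_log_le_div (x := (n + 1 : ℕ)) (y := n) (by positivity) (by positivity)
    have hinv : ((n + 1 : ℕ) - n : ℝ) / n ≤ 1 := by
      rw [div_le_one (by positivity)]; push_cast; linarith
    linarith
  convert abs_sub_div_sub_log_sub_log_le (log_natCast_pos hn)
    (log_le_log (by positivity) (by simp)) hlog_succ using 1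
  rw [sum_Ioc_succ_top n.zero_le, Nat.add_sub_cancel, norm_eq_abs]
  congr 1
  ring

lemma log_log_sub_log_log_floor_isBigO :
    (fun x : ℝ ↦ log (log x) - log (log ⌊x⌋₊)) =O[atTop] fun x ↦ (log ⌊x⌋₊)⁻¹ := by
  refine IsBigO.of_bound 1 ?_
  filter_upwards [eventually_ge_atTop 2] with x hx
  have hfloor : 2 ≤ ⌊x⌋₊ := Nat.le_floor (by exact_mod_cast hx)
  have hfloor' : (2 : ℝ) ≤ ⌊x⌋₊ := by exact_mod_cast hfloor
  have hle : (⌊x⌋₊ : ℝ) ≤ x := Nat.floor_le (by linarith)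
  have hlt : x < ⌊x⌋₊ + 1 := Nat.lt_floor_add_one x
  have hlog : 0 < log ⌊x⌋₊ := log_natCast_pos hfloor
  have hlog_le : log ⌊x⌋₊ ≤ log x := log_le_log (by linarith) hle
  have hlog_sub : log x - log ⌊x⌋₊ ≤ 1 :=
    (log_sub_log_le_div (by linarith) (by linarith)).trans
      ((div_le_one (by linarith)).2 (by linarith))
  rw [norm_of_nonneg (sub_nonneg.2 (log_le_log hlog hlog_le)), norm_of_nonneg (by positivity),
    one_mul, ← one_div]
  calc log (log x) - log (log ⌊x⌋₊) ≤ (log x - log ⌊x⌋₊) / log ⌊x⌋₊ :=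
        log_sub_log_le_div (hlog.trans_le hlog_le) hlog
    _ ≤ 1 / log ⌊x⌋₊ := by gcongr

lemma inv_log_floor_isBigO :
    (fun x : ℝ ↦ (log ⌊x⌋₊)⁻¹) =O[atTop] fun x ↦ (log x)⁻¹ :=
  (isEquivalent_nat_floor.log tendsto_id).inv.isBigO

lemma exists_norm_le_div_log_of_isBigO {E : Type*} [SeminormedAddCommGroup E]
    {f : ℝ → E} {x₀ : ℝ} (hx₀ : 1 < x₀)
    (hf : f =O[atTop] fun x ↦ (log x)⁻¹) (hbdd : ∀ X, ∃ M, ∀ x ∈ Set.Icc x₀ X, ‖f x‖ ≤ M) :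
    ∃ C, 0 < C ∧ ∀ x, x₀ ≤ x → ‖f x‖ ≤ C / log x := by
  obtain ⟨C₀, hC₀⟩ := hf.bound
  obtain ⟨X, hX⟩ := eventually_atTop.1 hC₀
  obtain ⟨M, hM⟩ := hbdd X
  refine ⟨max 1 (max C₀ (M * log X)), by positivity, fun x hx ↦ ?_⟩
  have hlog : 0 < log x := log_pos (hx₀.trans_le hx)
  rw [le_div_iff₀ hlog, le_max_iff, le_max_iff]
  right
  rcases le_total X x with hXx | hxX
  · left
    rw [← le_div_iff₀ hlog, div_eq_mul_inv]
    simpa only [norm_inv, norm_of_nonneg hlog.le] using hX x hXx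
  · right
    have hM₀ : 0 ≤ M := (norm_nonneg _).trans (hM x ⟨hx, hxX⟩)
    gcongr
    exacts [hM x ⟨hx, hxX⟩, by linarith]

variable {E : Type*} [NormedAddCommGroup E] [NormedSpace ℝ E]

lemma isBigO_smul_const {α : Type*} {l : Filter α} {f g : α → ℝ} (hfg : f =O[l] g) (a : E) :
    (fun x ↦ f x • a) =O[l] g :=
  ((ContinuousLinearMap.toSpanSingleton ℝ a).isBigO_comp f l).trans hfg

variable [CompleteSpace E]

theorem exists_sum_Ioc_inv_log_smul_isBigO {c : ℕ → E} {a : E}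
    (hc : (fun N : ℕ ↦ ∑ n ∈ Ioc 0 N, c n - log N • a) =O[atTop] (fun _ ↦ 1 : ℕ → ℝ)) :
    ∃ B, (fun N : ℕ ↦ ∑ n ∈ Ioc 0 N, (log n)⁻¹ • c n - (log (log N) • a + B))
      =O[atTop] fun N : ℕ ↦ (log N)⁻¹ := by
  -- `log` is the summatory function of `δ`, so `c - δ • a` has bounded partial sums.
  let δ : ℕ → ℝ := fun n ↦ log n - log (n - 1 : ℕ)
  have hbounded : (fun N ↦ ∑ n ∈ Ioc 0 N, (c n - δ n • a)) =O[atTop] (fun _ ↦ 1 : ℕ → ℝ) := by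
    simpa only [δ, sum_sub_distrib (fun n ↦ c n), ← sum_smul, sum_Ioc_log_sub_log_pred] using hc
  obtain ⟨B₁, hB₁⟩ := exists_sum_Ioc_smul_sub_isBigO hbounded antitoneOn_inv_log_natCast
    tendsto_inv_log_natCast
  obtain ⟨B₂, hB₂⟩ := exists_sum_Ioc_log_sub_log_div_log_isBigO
  refine ⟨B₁ + B₂ • a, (hB₁.add (isBigO_smul_const hB₂ a)).congr_left fun N ↦ ?_⟩
  have hsplit : ∑ n ∈ Ioc 0 N, (log n)⁻¹ • c n
      = ∑ n ∈ Ioc 0 N, (log n)⁻¹ • (c n - δ n • a) + (∑ n ∈ Ioc 0 N, δ n / log n) • a := by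
    rw [sum_smul, ← sum_add_distrib]
    refine sum_congr rfl fun n _ ↦ ?_
    module
  rw [hsplit]
  module

theorem exists_sum_Ioc_floor_inv_log_smul_isBigO {c : ℕ → E} {a : E}
    (hc : (fun N : ℕ ↦ ∑ n ∈ Ioc 0 N, c n - log N • a) =O[atTop] (fun _ ↦ 1 : ℕ → ℝ)) :
    ∃ B, (fun x : ℝ ↦ ∑ n ∈ Ioc 0 ⌊x⌋₊, (log n)⁻¹ • c n - (log (log x) • a + B))
      =O[atTop] fun x ↦ (log x)⁻¹ := by
  obtain ⟨B, hB⟩ := exists_sum_Ioc_inv_log_smul_isBigO hc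
  have hfloor := hB.comp_tendsto (tendsto_nat_floor_atTop (α := ℝ))
  have hshift : (fun x : ℝ ↦ (log (log x) - log (log ⌊x⌋₊)) • a)
      =O[atTop] fun x ↦ (log ⌊x⌋₊)⁻¹ := isBigO_smul_const log_log_sub_log_log_floor_isBigO a
  refine ⟨B, ((hfloor.sub hshift).trans inv_log_floor_isBigO).congr_left fun x ↦ ?_⟩
  simp only [Function.comp_apply]
  module

end LogSums

section CharacterSums

lemma sum_range_natCast_zmod {M : Type*} [AddCommMonoid M] {d : ℕ} [NeZero d] (f : ZMod d → M) :
    ∑ i ∈ range d, f i = ∑ a, f a := by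
  obtain ⟨d, rfl⟩ := Nat.exists_eq_succ_of_ne_zero (NeZero.ne d)
  rw [← Fin.sum_univ_eq_sum_range (fun i ↦ f (i : ZMod (d + 1)))]
  exact sum_congr rfl fun a _ ↦ congrArg f (ZMod.natCast_zmod_val (n := d + 1) a)

lemma sum_range_natCast_zmod_mod {M : Type*} [AddCommMonoid M] {d : ℕ} [NeZero d]
    {f : ZMod d → M} (hf : ∑ a, f a = 0) (N : ℕ) :
    ∑ i ∈ range N, f i = ∑ i ∈ range (N % d), f i := by
  nth_rw 1 [← Nat.mod_add_div N d]
  induction N / d with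
  | zero => simp
  | succ q ih =>
    rw [show N % d + d * (q + 1) = d + (N % d + d * q) by ring, sum_range_add,
      sum_range_natCast_zmod f, hf, zero_add]
    simpa using ih

lemma norm_sum_range_natCast_zmod_le {E : Type*} [SeminormedAddCommGroup E] {d : ℕ} [NeZero d]
    {f : ZMod d → E} {C : ℝ} (hf : ∑ a, f a = 0) (hC : ∀ a, ‖f a‖ ≤ C) (N : ℕ) :
    ‖∑ i ∈ range N, f i‖ ≤ d * C := by
  have hC₀ : 0 ≤ C := (norm_nonneg _).trans (hC 0)
  rw [sum_range_natCast_zmod_mod hf]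
  calc ‖∑ i ∈ range (N % d), f i‖ ≤ ∑ _i ∈ range (N % d), C := norm_sum_le_of_le _ fun _ _ ↦ hC _
    _ = (N % d : ℕ) * C := by simp
    _ ≤ d * C := by
      gcongr
      exact (N.mod_lt (NeZero.pos d)).le

variable {d : ℕ} [NeZero d] {χ : DirichletCharacter ℂ d}

lemma norm_sum_Ioc_char_le (hχ : χ ≠ 1) (N : ℕ) : ‖∑ i ∈ Ioc 0 N, χ i‖ ≤ d := by
  have hsum : ∑ a : ZMod d, χ (a + 1) = 0 :=
    (Equiv.sum_comp (Equiv.addRight (1 : ZMod d)) χ).trans (MulChar.sum_eq_zero_of_ne_one hχ)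
  have hshift : ∑ i ∈ Ioc 0 N, χ i = ∑ i ∈ range N, χ (i + 1) := by
    rw [← Ico_add_one_add_one_eq_Ioc, sum_Ico_eq_sum_range]
    simp [add_comm]
  rw [hshift]
  simpa using norm_sum_range_natCast_zmod_le hsum (fun a ↦ χ.norm_le_one (a + 1)) N

end CharacterSums

section LFunction

open DirichletCharacter

variable {d : ℕ} [NeZero d] {χ : DirichletCharacter ℂ d}

lemma tendsto_sum_Ioc_rpow_neg_smul_char {s : ℝ} (hs : 1 < s) :
    Tendsto (fun N : ℕ ↦ ∑ n ∈ Ioc 0 N, (n : ℝ) ^ (-s) • χ n) atTop (𝓝 (LFunction χ s)) := by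
  have hs' : 1 < (s : ℂ).re := by simpa using hs
  have hterm (N : ℕ) : ∑ n ∈ range (N + 1), LSeries.term (χ ·) s n
      = ∑ n ∈ Ioc 0 N, (n : ℝ) ^ (-s) • χ n := by
    rw [sum_range_succ', LSeries.term_zero, add_zero, ← Ico_add_one_add_one_eq_Ioc,
      sum_Ico_eq_sum_range]
    refine sum_congr (by simp) fun n _ ↦ ?_
    rw [LSeries.term_of_ne_zero n.succ_ne_zero, zero_add, add_comm 1 n, Complex.real_smul,
      Complex.ofReal_cpow (by positivity), Complex.ofReal_neg, Complex.cpow_neg,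
      Complex.ofReal_natCast, div_eq_inv_mul]
  rw [LFunction_eq_LSeries χ hs']
  have hsum := (LSeriesSummable_of_one_lt_re χ hs').LSeriesHasSum.tendsto_sum_nat
  simpa only [Function.comp_def, hterm] using hsum.comp (tendsto_add_atTop_nat 1)

lemma norm_LFunction_sub_sum_Ioc_le_of_one_lt (hχ : χ ≠ 1) {s : ℝ} (hs : 1 < s) (N : ℕ) :
    ‖LFunction χ s - ∑ n ∈ Ioc 0 N, (n : ℝ) ^ (-s) • χ n‖ ≤ 2 * d * ((N + 1 : ℕ) : ℝ) ^ (-s) := by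
  refine le_of_tendsto ((tendsto_sum_Ioc_rpow_neg_smul_char hs).sub_const _).norm ?_
  filter_upwards [eventually_ge_atTop N] with M hM
  rw [← sum_Ioc_consecutive _ N.zero_le hM, add_sub_cancel_left]
  refine norm_sum_Ioc_smul_le (f := fun n : ℕ ↦ (n : ℝ) ^ (-s))
    (fun n hn ↦ norm_sum_Ioc_le_two_mul (norm_sum_Ioc_char_le hχ) hn) (fun m hm n _ hmn ↦ ?_)
    (fun n _ ↦ by positivity) hM
  have hm₀ : (0 : ℝ) < m := by exact_mod_cast N.zero_le.trans_lt hm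
  exact rpow_le_rpow_of_nonpos hm₀ (by exact_mod_cast hmn) (by linarith)

lemma norm_LFunction_sub_sum_Ioc_le (hχ : χ ≠ 1) {s : ℝ} (hs : 1 ≤ s) (N : ℕ) :
    ‖LFunction χ s - ∑ n ∈ Ioc 0 N, (n : ℝ) ^ (-s) • χ n‖ ≤ 2 * d * ((N + 1 : ℕ) : ℝ) ^ (-s) := by
  have hcont_rpow {n : ℕ} (hn : n ≠ 0) : Continuous fun t : ℝ ↦ (n : ℝ) ^ (-t) :=
    (continuous_const_rpow (by exact_mod_cast hn)).comp continuous_neg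
  have hcont_L : Continuous fun t : ℝ ↦ LFunction χ t :=
    (differentiable_LFunction hχ).continuous.comp Complex.continuous_ofReal
  have hcont_sum : Continuous fun t : ℝ ↦ ∑ n ∈ Ioc 0 N, (n : ℝ) ^ (-t) • χ n :=
    continuous_finsetSum _ fun n hn ↦ (hcont_rpow (mem_Ioc.1 hn).1.ne').smul continuous_const
  refine le_of_tendsto_of_tendsto (b := 𝓝[>] s)
    ((hcont_L.sub hcont_sum).norm.tendsto s |>.mono_left nhdsWithin_le_nhds)
    ((hcont_rpow N.succ_ne_zero).const_mul (2 * d : ℝ) |>.tendsto s |>.mono_left nhdsWithin_le_nhds)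
    ?_
  filter_upwards [self_mem_nhdsWithin] with t ht
  exact norm_LFunction_sub_sum_Ioc_le_of_one_lt hχ (hs.trans_lt ht) N

lemma sum_log_div_smul_char_isBigO_one (hχ : χ ≠ 1) :
    (fun N : ℕ ↦ ∑ n ∈ Ioc 0 N, (log n / n) • χ n) =O[atTop] (fun _ ↦ 1 : ℕ → ℝ) := by
  have hantitone : AntitoneOn (fun n : ℕ ↦ log n / n) (Set.Ioi 2) := by
    have hexp (n : ℕ) (hn : n ∈ Set.Ioi 2) : exp 1 ≤ n :=
      exp_one_lt_three.le.trans (by exact_mod_cast hn)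
    exact fun m hm n hn hmn ↦
      log_div_self_antitoneOn (hexp m hm) (hexp n hn) (by exact_mod_cast hmn)
  have hlim : Tendsto (fun n : ℕ ↦ log n / n) atTop (𝓝 0) :=
    isLittleO_log_id_atTop.tendsto_div_nhds_zero.comp tendsto_natCast_atTop_atTop
  obtain ⟨S, hS⟩ := exists_sum_Ioc_smul_sub_isBigO
    (isBigO_one_nat_atTop_iff.2 ⟨d, norm_sum_Ioc_char_le hχ⟩) hantitone hlim
  simpa using (hS.trans (hlim.isBigO_one ℝ)).add (isBigO_const_const S one_ne_zero atTop)

end LFunction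

section VonMangoldt

open ArithmeticFunction hiding log
open scoped Nat

lemma sum_Ioc_log_smul_eq {R : Type*} [CommRing R] [Algebra ℝ R] (f : ℕ →*₀ R) (N : ℕ) :
    ∑ n ∈ Ioc 0 N, log n • f n
      = ∑ i ∈ Ioc 0 N, Λ i • (f i * ∑ m ∈ Ioc 0 (N / i), f m) := by
  let f' : ArithmeticFunction R := ⟨f, map_zero f⟩
  let Λf : ArithmeticFunction R := ⟨fun n ↦ Λ n • f n, by simp⟩
  have hmul (n : ℕ) : (Λf * f') n = log n • f n := by
    rw [← vonMangoldt_sum, sum_smul, mul_apply,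
      Nat.sum_divisorsAntidiagonal (fun i j ↦ Λf i * f' j)]
    refine sum_congr rfl fun i hi ↦ ?_
    rw [coe_mk, coe_mk, smul_mul_assoc, ← map_mul,
      Nat.mul_div_cancel' (Nat.dvd_of_mem_divisors hi)]
  simpa only [hmul, Λf, f', coe_mk, smul_mul_assoc] using sum_Ioc_mul_eq_sum_sum Λf f' N

lemma natCast_div_lt_natCast_div_add_one (N i : ℕ) : (N : ℝ) / i < (N / i : ℕ) + 1 := by
  rw [← Nat.floor_div_eq_div (K := ℝ)]
  exact Nat.lt_floor_add_one _

lemma sum_Ioc_vonMangoldt_le (N : ℕ) : ∑ n ∈ Ioc 0 N, Λ n ≤ (log 4 + 4) * N := by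
  simpa only [Chebyshev.psi, Nat.floor_natCast] using
    Chebyshev.psi_le_const_mul_self (N.cast_nonneg (α := ℝ))

lemma norm_sum_vonMangoldt_smul_mul_le {A : Type*} [NormedRing A] [NormedAlgebra ℝ A]
    {f r : ℕ → A} {C : ℝ} (hf : ∀ n, ‖f n‖ ≤ (n : ℝ)⁻¹) (hr : ∀ n : ℕ, ‖r n‖ ≤ C / (n + 1))
    (N : ℕ) : ‖∑ i ∈ Ioc 0 N, Λ i • (f i * r (N / i))‖ ≤ (log 4 + 4) * C := by
  have hC : 0 ≤ C := by simpa using (norm_nonneg _).trans (hr 0)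
  have hterm (i : ℕ) (hi : i ∈ Ioc 0 N) : ‖Λ i • (f i * r (N / i))‖ ≤ Λ i * (C / N) := by
    have hi₀ : (0 : ℝ) < i := by exact_mod_cast (mem_Ioc.1 hi).1
    have hN : (0 : ℝ) < N := hi₀.trans_le (by exact_mod_cast (mem_Ioc.1 hi).2)
    rw [norm_smul, norm_of_nonneg vonMangoldt_nonneg]
    gcongr
    calc ‖f i * r (N / i)‖ ≤ (i : ℝ)⁻¹ * (C / (N / i)) := by
          refine norm_mul_le_of_le (hf i) ((hr _).trans ?_)
          gcongr
          exact (natCast_div_lt_natCast_div_add_one N i).le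
      _ = C / N := by field_simp
  rcases N.eq_zero_or_pos with rfl | hN
  · simpa using mul_nonneg (by positivity) hC
  calc ‖∑ i ∈ Ioc 0 N, Λ i • (f i * r (N / i))‖ ≤ ∑ i ∈ Ioc 0 N, Λ i * (C / N) :=
        norm_sum_le_of_le _ hterm
    _ = (∑ i ∈ Ioc 0 N, Λ i) * (C / N) := (sum_mul ..).symm
    _ ≤ (log 4 + 4) * N * (C / N) := by gcongr; exact sum_Ioc_vonMangoldt_le N
    _ = (log 4 + 4) * C := by field_simp

lemma sum_vonMangoldt_smul_isBigO_one {𝕜 : Type*} [NormedField 𝕜] [NormedAlgebra ℝ 𝕜]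
    {f : ℕ →*₀ 𝕜} {L : 𝕜} {C : ℝ} (hL : L ≠ 0) (hf : ∀ n, ‖f n‖ ≤ (n : ℝ)⁻¹)
    (hfL : ∀ N : ℕ, ‖L - ∑ n ∈ Ioc 0 N, f n‖ ≤ C / (N + 1))
    (hlog : (fun N : ℕ ↦ ∑ n ∈ Ioc 0 N, log n • f n) =O[atTop] (fun _ ↦ 1 : ℕ → ℝ)) :
    (fun N : ℕ ↦ ∑ n ∈ Ioc 0 N, Λ n • f n) =O[atTop] (fun _ ↦ 1 : ℕ → ℝ) := by
  have hsplit (N : ℕ) : ∑ n ∈ Ioc 0 N, log n • f n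
      + ∑ i ∈ Ioc 0 N, Λ i • (f i * (L - ∑ m ∈ Ioc 0 (N / i), f m))
        = L * ∑ n ∈ Ioc 0 N, Λ n • f n := by
    rw [sum_Ioc_log_smul_eq, ← sum_add_distrib, mul_sum]
    refine sum_congr rfl fun i _ ↦ ?_
    rw [← smul_add, mul_smul_comm, ← mul_add, add_sub_cancel, mul_comm]
  have herror : (fun N : ℕ ↦ ∑ i ∈ Ioc 0 N, Λ i • (f i * (L - ∑ m ∈ Ioc 0 (N / i), f m)))
      =O[atTop] (fun _ ↦ 1 : ℕ → ℝ) :=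
    isBigO_one_nat_atTop_iff.2 ⟨_, norm_sum_vonMangoldt_smul_mul_le hf hfL⟩
  rw [← isBigO_const_mul_left_iff hL]
  exact (hlog.add herror).congr_left hsplit

theorem sum_vonMangoldt_div_smul_char_isBigO_one {d : ℕ} [NeZero d] {χ : DirichletCharacter ℂ d}
    (hχ : χ ≠ 1) :
    (fun N : ℕ ↦ ∑ n ∈ Ioc 0 N, (Λ n / n) • χ n) =O[atTop] (fun _ ↦ 1 : ℕ → ℝ) := by
  let f : ℕ →*₀ ℂ :=
    { toFun n := (n : ℝ)⁻¹ • χ n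
      map_zero' := by simp
      map_one' := by simp
      map_mul' m n := by push_cast; rw [mul_inv, map_mul, smul_mul_smul_comm] }
  have hf (n : ℕ) : ‖f n‖ ≤ (n : ℝ)⁻¹ := by
    simpa [f, norm_smul] using mul_le_of_le_one_right (by positivity) (χ.norm_le_one n)
  have hfL (N : ℕ) : ‖DirichletCharacter.LFunction χ 1 - ∑ n ∈ Ioc 0 N, f n‖ ≤ 2 * d / (N + 1) := by
    simpa [f, rpow_neg_one, div_eq_mul_inv] using norm_LFunction_sub_sum_Ioc_le hχ le_rfl N
  have hlog : (fun N : ℕ ↦ ∑ n ∈ Ioc 0 N, log n • f n) =O[atTop] (fun _ ↦ 1 : ℕ → ℝ) := by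
    simpa only [f, MonoidWithZeroHom.coe_mk, ZeroHom.coe_mk, smul_smul, div_eq_mul_inv]
      using sum_log_div_smul_char_isBigO_one hχ
  simpa only [f, MonoidWithZeroHom.coe_mk, ZeroHom.coe_mk, smul_smul, ← div_eq_mul_inv]
    using sum_vonMangoldt_smul_isBigO_one
      (DirichletCharacter.LFunction_ne_zero_of_one_le_re χ (Or.inl hχ) (by simp)) hf hfL hlog

lemma sum_Ioc_vonMangoldt_mul_div_eq_log_factorial (N : ℕ) :
    ∑ n ∈ Ioc 0 N, Λ n * (N / n : ℕ) = log (N ! : ℕ) := by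
  rw [← sum_Ioc_mul_zeta_eq_sum, vonMangoldt_mul_zeta]
  simp only [log_apply]
  induction N with
  | zero => simp
  | succ N ih =>
    rw [sum_Ioc_succ_top N.zero_le, ih, Nat.factorial_succ, Nat.cast_mul,
      log_mul (by positivity) (by positivity), add_comm]

lemma abs_log_factorial_sub_le (N : ℕ) : |log (N ! : ℕ) - N * log N| ≤ N := by
  rcases eq_or_ne N 0 with rfl | hN
  · simp
  have hlower := Stirling.le_log_factorial_stirling hN
  have hupper : log (N ! : ℕ) ≤ N * log N := by
    rw [← log_pow]
    exact log_le_log (by exact_mod_cast N.factorial_pos) (by exact_mod_cast N.factorial_le_pow)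
  have hlog_pi : 0 ≤ log (2 * π) := log_nonneg (by linarith [pi_gt_three])
  rw [abs_le]
  constructor <;> linarith [log_natCast_nonneg N, N.cast_nonneg (α := ℝ)]

lemma abs_mul_sum_vonMangoldt_div_sub_log_factorial_le (N : ℕ) :
    |N * ∑ n ∈ Ioc 0 N, Λ n / n - log (N ! : ℕ)| ≤ (log 4 + 4) * N := by
  rw [← sum_Ioc_vonMangoldt_mul_div_eq_log_factorial, mul_sum, ← sum_sub_distrib, abs_of_nonneg]
  · refine (sum_le_sum fun n _ ↦ ?_).trans (sum_Ioc_vonMangoldt_le N)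
    linarith [mul_le_mul_of_nonneg_left (natCast_div_lt_natCast_div_add_one N n).le
      (vonMangoldt_nonneg (n := n)), mul_div_left_comm (N : ℝ) (Λ n) n]
  · refine sum_nonneg fun n _ ↦ sub_nonneg.2 ?_
    rw [mul_div_left_comm]
    exact mul_le_mul_of_nonneg_left Nat.cast_div_le vonMangoldt_nonneg

theorem sum_vonMangoldt_div_sub_log_isBigO_one :
    (fun N : ℕ ↦ ∑ n ∈ Ioc 0 N, Λ n / n - log N) =O[atTop] (fun _ ↦ 1 : ℕ → ℝ) := by
  refine isBigO_one_nat_atTop_iff.2 ⟨log 4 + 4 + 1, fun N ↦ ?_⟩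
  rcases N.eq_zero_or_pos with rfl | hN
  · simpa using by positivity
  have hN₀ : (0 : ℝ) < N := by exact_mod_cast hN
  refine le_of_mul_le_mul_left ?_ hN₀
  calc N * ‖∑ n ∈ Ioc 0 N, Λ n / n - log N‖
      = |(N * ∑ n ∈ Ioc 0 N, Λ n / n - log (N ! : ℕ)) + (log (N ! : ℕ) - N * log N)| := by
        rw [norm_eq_abs, ← abs_of_pos hN₀, ← abs_mul, abs_of_pos hN₀, sub_add_sub_cancel, mul_sub]
    _ ≤ (log 4 + 4) * N + N :=
        (abs_add_le _ _).trans <| add_le_add (abs_mul_sum_vonMangoldt_div_sub_log_factorial_le N)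
          (abs_log_factorial_sub_le N)
    _ = N * (log 4 + 4 + 1) := by ring

lemma sum_primesLE_eq_sum_Ioc_ite {M : Type*} [AddCommMonoid M] (f : ℕ → M) (N : ℕ) :
    ∑ p ∈ Nat.primesLE N, f p = ∑ n ∈ Ioc 0 N, if n.Prime then f n else 0 := by
  rw [Nat.primesLE_eq_filter_Ioc_zero, sum_filter]

lemma summable_ite_prime_vonMangoldt_div :
    Summable fun n : ℕ ↦ (if n.Prime then 0 else Λ n) / n := by
  have hclass (n : ℕ) : vonMangoldt.residueClass (0 : ZMod 1) n = Λ n := by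
    simp [vonMangoldt.residueClass, Subsingleton.elim (n : ZMod 1) 0]
  simpa only [hclass] using vonMangoldt.summable_residueClass_non_primes_div (0 : ZMod 1)

lemma sum_primesLE_sub_sum_vonMangoldt_isBigO_one {E : Type*} [NormedAddCommGroup E]
    [NormedSpace ℝ E] {g : ℕ → E} {C : ℝ} (hg : ∀ n, ‖g n‖ ≤ C) :
    (fun N : ℕ ↦ ∑ p ∈ Nat.primesLE N, (log p / p) • g p - ∑ n ∈ Ioc 0 N, (Λ n / n) • g n)
      =O[atTop] (fun _ ↦ 1 : ℕ → ℝ) := by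
  have hterm (n : ℕ) : ‖(if n.Prime then (log n / n) • g n else 0) - (Λ n / n) • g n‖
      ≤ (if n.Prime then 0 else Λ n) / n * C := by
    split_ifs with hn
    · simp [vonMangoldt_apply_prime hn]
    · rw [zero_sub, norm_neg, norm_smul,
        norm_of_nonneg (div_nonneg vonMangoldt_nonneg n.cast_nonneg)]
      gcongr
      exact hg n
  have hnonneg (n : ℕ) : 0 ≤ (if n.Prime then 0 else Λ n) / n * C :=
    (norm_nonneg _).trans (hterm n)
  refine isBigO_one_nat_atTop_iff.2
    ⟨∑' n : ℕ, (if n.Prime then 0 else Λ n) / n * C, fun N ↦ ?_⟩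
  rw [sum_primesLE_eq_sum_Ioc_ite, ← sum_sub_distrib]
  exact (norm_sum_le_of_le _ fun n _ ↦ hterm n).trans
    ((summable_ite_prime_vonMangoldt_div.mul_right C).sum_le_tsum _ fun n _ ↦ hnonneg n)

end VonMangoldt

section PrimeSums

open ArithmeticFunction hiding log
open scoped Nat

section

variable {E F : Type*} [NormedAddCommGroup E] [NormedSpace ℝ E] [NormedAddCommGroup F]
  [NormedSpace ℝ F]

/-- The conclusion of Mertens' second theorem for the weight `g` with leading coefficient `a`:
there is a constant `B` with `∑ p ≤ x, g p / p = (log log x) a + B + O(1 / log x)`. -/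
def HasMertensAsymptotic (g : ℕ → E) (a : E) : Prop :=
  ∃ B, (fun x : ℝ ↦ ∑ p ∈ Nat.primesLE ⌊x⌋₊, (p : ℝ)⁻¹ • g p - (log (log x) • a + B))
    =O[atTop] fun x ↦ (log x)⁻¹

namespace HasMertensAsymptotic

variable {g h : ℕ → E} {a b : E}

lemma add (hg : HasMertensAsymptotic g a) (hh : HasMertensAsymptotic h b) :
    HasMertensAsymptotic (fun p ↦ g p + h p) (a + b) := by
  obtain ⟨B, hB⟩ := hg
  obtain ⟨B', hB'⟩ := hh
  refine ⟨B + B', (hB.add hB').congr_left fun x ↦ ?_⟩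
  simp only [smul_add, sum_add_distrib]
  abel

lemma of_eq_zero {k : ℕ} (hg : ∀ p, p.Prime → k < p → g p = 0) : HasMertensAsymptotic g 0 := by
  refine ⟨∑ p ∈ Nat.primesLE k, (p : ℝ)⁻¹ • g p, EventuallyEq.trans_isBigO ?_ (isBigO_zero _ _)⟩
  filter_upwards [eventually_ge_atTop (k : ℝ)] with x hx
  rw [smul_zero, zero_add, sub_eq_zero]
  refine (sum_subset (Nat.primesLE_mono (Nat.le_floor hx)) fun p hp hpk ↦ ?_).symm
  have hp' := Nat.prime_of_mem_primesLE hp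
  rw [hg p hp' (not_le.1 fun hle ↦ hpk (Nat.mem_primesLE.2 ⟨hle, hp'⟩)), smul_zero]

lemma congr (hg : HasMertensAsymptotic g a) {k : ℕ}
    (hgh : ∀ p, p.Prime → k < p → g p = h p) : HasMertensAsymptotic h a := by
  have hdiff : HasMertensAsymptotic (fun p ↦ h p - g p) 0 :=
    of_eq_zero fun p hp hkp ↦ sub_eq_zero.2 (hgh p hp hkp).symm
  simpa only [add_sub_cancel, add_zero] using hg.add hdiff

lemma sum {ι : Type*} {s : Finset ι} {g : ι → ℕ → E} {a : ι → E}
    (hg : ∀ i ∈ s, HasMertensAsymptotic (g i) (a i)) :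
    HasMertensAsymptotic (fun p ↦ ∑ i ∈ s, g i p) (∑ i ∈ s, a i) := by
  classical
  induction s using Finset.induction_on with
  | empty => simpa only [sum_empty] using of_eq_zero (k := 0) fun _ _ _ ↦ rfl
  | insert i s hi ih =>
    simp only [sum_insert hi]
    exact (hg i (mem_insert_self i s)).add (ih fun j hj ↦ hg j (mem_insert_of_mem hj))

lemma map (T : E →L[ℝ] F) (hg : HasMertensAsymptotic g a) :
    HasMertensAsymptotic (fun p ↦ T (g p)) (T a) := by
  obtain ⟨B, hB⟩ := hg
  refine ⟨T B, ((T.isBigO_comp _ _).trans hB).congr_left fun x ↦ ?_⟩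
  simp only [map_sub, map_add, map_sum, map_smul]

lemma const_smul (hg : HasMertensAsymptotic g a) (r : ℝ) :
    HasMertensAsymptotic (fun p ↦ r • g p) (r • a) :=
  hg.map (r • ContinuousLinearMap.id ℝ E)

lemma exists_norm_le_div_log (hg : HasMertensAsymptotic g a) {x₀ : ℝ} (hx₀ : 1 < x₀) :
    ∃ B C, 0 < C ∧ ∀ x : ℝ, x₀ ≤ x →
      ‖∑ p ∈ Nat.primesLE ⌊x⌋₊, (p : ℝ)⁻¹ • g p - (log (log x) • a + B)‖ ≤ C / log x := by
  obtain ⟨B, hB⟩ := hg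
  refine ⟨B, exists_norm_le_div_log_of_isBigO hx₀ hB fun X ↦ ?_⟩
  have hcont : ContinuousOn (fun x ↦ log (log x) • a + B) (Set.Icc x₀ X) := by
    have hlog (x : ℝ) (hx : x ∈ Set.Icc x₀ X) : x ≠ 0 ∧ log x ≠ 0 :=
      ⟨by linarith [hx.1], (log_pos (hx₀.trans_le hx.1)).ne'⟩
    exact (((continuousOn_id.log fun x hx ↦ (hlog x hx).1).log
      fun x hx ↦ (hlog x hx).2).smul continuousOn_const).add continuousOn_const
  obtain ⟨M, hM⟩ := isCompact_Icc.exists_bound_of_continuousOn hcont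
  refine ⟨∑ p ∈ Nat.primesLE ⌊X⌋₊, ‖(p : ℝ)⁻¹ • g p‖ + M, fun x hx ↦
    norm_sub_le_of_le ((norm_sum_le _ _).trans ?_) (hM x hx)⟩
  exact sum_le_sum_of_subset_of_nonneg (Nat.primesLE_mono (Nat.floor_mono hx.2))
    fun _ _ _ ↦ norm_nonneg _

variable [CompleteSpace E]

lemma of_sum_log_div_smul_isBigO
    (hg : (fun N : ℕ ↦ ∑ p ∈ Nat.primesLE N, (log p / p) • g p - log N • a)
      =O[atTop] (fun _ ↦ 1 : ℕ → ℝ)) : HasMertensAsymptotic g a := by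
  simp only [sum_primesLE_eq_sum_Ioc_ite] at hg
  obtain ⟨B, hB⟩ := exists_sum_Ioc_floor_inv_log_smul_isBigO hg
  refine ⟨B, hB.congr_left fun x ↦ ?_⟩
  rw [sum_primesLE_eq_sum_Ioc_ite]
  congr 1
  refine sum_congr rfl fun n _ ↦ ?_
  split_ifs with hn
  · have hlog : log n ≠ 0 := (log_natCast_pos hn.two_le).ne'
    rw [smul_smul, div_eq_mul_inv, inv_mul_cancel_left₀ hlog]
  · rw [smul_zero]

lemma of_sum_vonMangoldt_div_smul_isBigO {C : ℝ} (hC : ∀ n, ‖g n‖ ≤ C)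
    (hg : (fun N : ℕ ↦ ∑ n ∈ Ioc 0 N, (Λ n / n) • g n - log N • a)
      =O[atTop] (fun _ ↦ 1 : ℕ → ℝ)) : HasMertensAsymptotic g a :=
  of_sum_log_div_smul_isBigO <|
    ((sum_primesLE_sub_sum_vonMangoldt_isBigO_one hC).add hg).congr_left fun _ ↦
      sub_add_sub_cancel _ _ _

end HasMertensAsymptotic

theorem hasMertensAsymptotic_const (a : E) : HasMertensAsymptotic (fun _ ↦ a) a := by
  have hone : HasMertensAsymptotic (fun _ ↦ (1 : ℝ)) 1 :=
    .of_sum_vonMangoldt_div_smul_isBigO (fun _ ↦ le_rfl) <| by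
      simpa only [smul_eq_mul, mul_one] using sum_vonMangoldt_div_sub_log_isBigO_one
  simpa using hone.map (ContinuousLinearMap.toSpanSingleton ℝ a)

end

section Characters

variable {d : ℕ} [NeZero d]

lemma hasMertensAsymptotic_one_char :
    HasMertensAsymptotic (fun p ↦ (1 : DirichletCharacter ℂ d) p) 1 := by
  refine (hasMertensAsymptotic_const (1 : ℂ)).congr (k := d) fun p hp hdp ↦ ?_
  have hcoprime : p.Coprime d := Nat.coprime_of_lt_prime (NeZero.ne d) hdp hp
  exact (MulChar.one_apply ((ZMod.isUnit_iff_coprime p d).2 hcoprime)).symm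

lemma hasMertensAsymptotic_char_of_ne_one {χ : DirichletCharacter ℂ d} (hχ : χ ≠ 1) :
    HasMertensAsymptotic (fun p ↦ χ p) 0 := by
  refine .of_sum_vonMangoldt_div_smul_isBigO (fun n ↦ χ.norm_le_one n) ?_
  simpa only [smul_zero, sub_zero] using sum_vonMangoldt_div_smul_char_isBigO_one hχ

open Classical in
lemma hasMertensAsymptotic_char (χ : DirichletCharacter ℂ d) :
    HasMertensAsymptotic (fun p ↦ χ p) (if χ = 1 then 1 else 0) := by
  split_ifs with hχ
  · exact hχ ▸ hasMertensAsymptotic_one_char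
  · exact hasMertensAsymptotic_char_of_ne_one hχ

theorem hasMertensAsymptotic_residueClass {a : ZMod d} (ha : IsUnit a) :
    HasMertensAsymptotic (fun p ↦ if (p : ZMod d) = a then 1 else 0) (φ d : ℝ)⁻¹ := by
  classical
  have hsum := HasMertensAsymptotic.sum (s := univ) fun (χ : DirichletCharacter ℂ d) _ ↦
    (hasMertensAsymptotic_char χ).map (ContinuousLinearMap.mul ℝ ℂ (χ a⁻¹))
  have hone : (1 : DirichletCharacter ℂ d) a⁻¹ = 1 :=
    MulChar.one_apply (.of_mul_eq_one a (ZMod.inv_mul_of_unit a ha))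
  simp only [ContinuousLinearMap.mul_apply', DirichletCharacter.sum_char_inv_mul_char_eq ℂ ha,
    mul_ite, mul_one, mul_zero, sum_ite_eq', mem_univ, if_true, hone] at hsum
  have hφ : (φ d : ℝ) ≠ 0 := by exact_mod_cast (Nat.totient_pos.2 (NeZero.pos d)).ne'
  have hreal := (hsum.map Complex.reCLM).const_smul (φ d : ℝ)⁻¹
  simpa [apply_ite, hφ, eq_comm] using hreal

end Characters

section Gcd

lemma sum_divisors_ite_dvd_totient {k : ℕ} (hk : k ≠ 0) (m : ℕ) :
    ∑ d ∈ k.divisors, (if d ∣ m then φ d else 0) = m.gcd k := by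
  have hdivisors : k.divisors.filter (· ∣ m) = (m.gcd k).divisors := by
    ext d
    simp [Nat.dvd_gcd_iff, hk, and_comm]
  rw [← sum_filter, hdivisors, Nat.sum_totient]

theorem hasMertensAsymptotic_gcd_sub_one {k : ℕ} (hk : k ≠ 0) :
    HasMertensAsymptotic (fun p ↦ ((p - 1).gcd k : ℝ)) k.divisors.card := by
  have hsum := HasMertensAsymptotic.sum fun d (hd : d ∈ k.divisors) ↦
    have : NeZero d := ⟨(Nat.pos_of_mem_divisors hd).ne'⟩
    (hasMertensAsymptotic_residueClass (isUnit_one (M := ZMod d))).const_smul (φ d : ℝ)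
  have hcoeff : ∑ d ∈ k.divisors, (φ d : ℝ) • (φ d : ℝ)⁻¹ = k.divisors.card := by
    rw [card_eq_sum_ones, Nat.cast_sum]
    refine sum_congr rfl fun d hd ↦ ?_
    rw [smul_eq_mul, Nat.cast_one, mul_inv_cancel₀]
    exact_mod_cast (Nat.totient_pos.2 (Nat.pos_of_mem_divisors hd)).ne'
  rw [hcoeff] at hsum
  refine hsum.congr (k := 0) fun p hp _ ↦ ?_
  rw [← sum_divisors_ite_dvd_totient hk, Nat.cast_sum]
  refine sum_congr rfl fun d _ ↦ ?_
  have hdvd : (p : ZMod d) = 1 ↔ d ∣ p - 1 := by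
    rw [← Nat.cast_one, eq_comm, ZMod.natCast_eq_natCast_iff, Nat.modEq_iff_dvd' hp.one_le]
  simp [hdvd]

theorem hasMertensAsymptotic_ite_coprime_gcd_sub_one {k : ℕ} (hk : k ≠ 0) :
    HasMertensAsymptotic (fun p ↦ if p.Coprime k then ((p - 1).gcd k : ℝ) else 0)
      k.divisors.card :=
  (hasMertensAsymptotic_gcd_sub_one hk).congr (k := k) fun _ hp hkp ↦
    (if_pos (Nat.coprime_of_lt_prime hk hkp hp)).symm

end Gcd

end PrimeSums

end

theorem stmt_16 (k : ℕ) (hk : 1 ≤ k) :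
    ∃ B C : ℝ, 0 < C ∧ ∀ x : ℝ, 3 ≤ x →
      |(∑ p ∈ (Finset.Icc 1 ⌊x⌋₊).filter (fun p => p.Prime ∧ Nat.Coprime p k),
          (Nat.gcd (p - 1) k : ℝ) / (p : ℝ)) -
        ((k.divisors.card : ℝ) * Real.log (Real.log x) + B)| ≤ C / Real.log x := by
  have hk₀ : k ≠ 0 := Nat.one_le_iff_ne_zero.1 hk
  obtain ⟨B, C, hC, hbound⟩ :=
    (hasMertensAsymptotic_ite_coprime_gcd_sub_one hk₀).exists_norm_le_div_log (x₀ := 3) (by simp)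
  refine ⟨B, C, hC, fun x hx ↦ ?_⟩
  have hsum : ∑ p ∈ (Finset.Icc 1 ⌊x⌋₊).filter (fun p ↦ p.Prime ∧ Nat.Coprime p k),
        (Nat.gcd (p - 1) k : ℝ) / p
      = ∑ p ∈ Nat.primesLE ⌊x⌋₊,
        (p : ℝ)⁻¹ • if p.Coprime k then (Nat.gcd (p - 1) k : ℝ) else 0 := by
    simp only [Nat.primesLE_eq_filter_Icc_one, ← Finset.filter_filter, Finset.sum_filter,
      smul_eq_mul, mul_ite, mul_zero, div_eq_inv_mul]
  rw [hsum, mul_comm]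
  exact hbound x hx
end
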